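/- For each integer k ≥ 2 and all w, w', ζ: H_{2k}(w, w', 0, …, 0) = det_{i,j=0}^{k−2} ( H₄(w,w')·η_{i,j} + (ζ²−1)(η_{i−1,j} + η_{i,j−1} + (ζ²−1)ww'·η_{i−1,j−1}) ), where H₄(w,w') = 3 + ζ² + (ζ²−1)(w + w'), and where η_{i,j} = Σ_{n=⌈(i+j)/3⌉}^{min(i,j)} n!(3+ζ²)^{3n−(i+j)}(ζ²−1)^{i+j−2n} / ((i−n)!(j−n)!(3n−(i+j))!) for i,j ≥ 0, and η_{i,j} = 0 if i < 0 or j < 0. -/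

import Mathlib

noncomputable section

open Complex
open scoped BigOperators

/-- Jacobi theta function `ϑ₁(z|τ)` with nome `p = e^{iπτ}` (Whittaker–Watson convention). -/
def th1 (z τ : ℂ) : ℂ :=
  -Complex.I * ∑' n : ℤ, (-1 : ℂ) ^ n *
    Complex.exp ((Real.pi : ℂ) * Complex.I * τ * ((n : ℂ) + 1/2) ^ 2 + (2 * (n : ℂ) + 1) * Complex.I * z)

/-- Jacobi theta function `ϑ₂(z|τ)`. -/
def th2 (z τ : ℂ) : ℂ :=
  ∑' n : ℤ,
    Complex.exp ((Real.pi : ℂ) * Complex.I * τ * ((n : ℂ) + 1/2) ^ 2 + (2 * (n : ℂ) + 1) * Complex.I * z)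

/-- Jacobi theta function `ϑ₃(z|τ)`. -/
def th3 (z τ : ℂ) : ℂ :=
  ∑' n : ℤ, Complex.exp ((Real.pi : ℂ) * Complex.I * τ * (n : ℂ) ^ 2 + 2 * (n : ℂ) * Complex.I * z)

/-- Jacobi theta function `ϑ₄(z|τ)`. -/
def th4 (z τ : ℂ) : ℂ :=
  ∑' n : ℤ, (-1 : ℂ) ^ n *
    Complex.exp ((Real.pi : ℂ) * Complex.I * τ * (n : ℂ) ^ 2 + 2 * (n : ℂ) * Complex.I * z)

/-- The crossing parameter `η = π/3`. -/
def ηc : ℂ := (Real.pi : ℂ) / 3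

/-- The elliptic nome `p = e^{iπτ}`. -/
def pnome (τ : ℂ) : ℂ := Complex.exp ((Real.pi : ℂ) * Complex.I * τ)

/-- `ζ = (ϑ₁(η,p²)/ϑ₄(η,p²))²`. -/
def zet (τ : ℂ) : ℂ := (th1 ηc (2 * τ) / th4 ηc (2 * τ)) ^ 2

/-- The nome `p` is real with `0 < p < 1`. -/
def preal (τ : ℂ) : Prop := (pnome τ).im = 0 ∧ 0 < (pnome τ).re ∧ (pnome τ).re < 1

/-- A tuple given by a list of prescribed entries, padded by zeros. -/
def padded {n : ℕ} (l : List ℂ) : Fin n → ℂ := fun j => l.getD (j : ℕ) 0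

/-- Extension of a tuple by a list of prescribed further entries (padded by zeros). -/
def extL {m n : ℕ} (w : Fin m → ℂ) (l : List ℂ) : Fin n → ℂ :=
  fun j => if h : (j : ℕ) < m then w ⟨j, h⟩ else l.getD ((j : ℕ) - m) 0

/-- First `k` entries of a `2k`-tuple. -/
def firstHalf {k : ℕ} (x : Fin (2 * k) → ℂ) : Fin k → ℂ :=
  fun i => x ⟨(i : ℕ), by have := i.2; omega⟩

/-- Last `k` entries of a `2k`-tuple. -/
def secondHalf {k : ℕ} (x : Fin (2 * k) → ℂ) : Fin k → ℂ :=
  fun i => x ⟨k + (i : ℕ), by have := i.2; omega⟩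

/-- `𝕙(x,y) = ϑ₁(x−y+η)ϑ₁(x−y−η)ϑ₁(x+y+η)ϑ₁(x+y−η)`. -/
def hh (τ x y : ℂ) : ℂ :=
  th1 (x - y + ηc) τ * th1 (x - y - ηc) τ * th1 (x + y + ηc) τ * th1 (x + y - ηc) τ

/-- `𝔻(x₁,…,x_k) = ∏_{i<j} ϑ₁(x_j−x_i)ϑ₁(x_j+x_i)`. -/
def vdTheta (τ : ℂ) {k : ℕ} (y : Fin k → ℂ) : ℂ :=
  ∏ i : Fin k, ∏ j : Fin k, if i < j then th1 (y j - y i) τ * th1 (y j + y i) τ else 1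

/-- The elliptic Tsuchiya determinant `ℍ_{2k}(x₁,…,x_k; x_{k+1},…,x_{2k})`. -/
def tsuchiya (τ : ℂ) (k : ℕ) (x : Fin (2 * k) → ℂ) : ℂ :=
  (∏ i : Fin k, ∏ j : Fin k, hh τ (firstHalf x i) (secondHalf x j))
    / (vdTheta τ (firstHalf x) * vdTheta τ (secondHalf x))
    * Matrix.det (Matrix.of fun i j : Fin k => (hh τ (firstHalf x i) (secondHalf x j))⁻¹)

/-- The expression defining the elliptic Tsuchiya determinant is well defined:
the Vandermonde-type denominators and the entries `𝕙(x_i,x_{j+k})` are nonzero. -/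
def tsuDefined (τ : ℂ) (k : ℕ) (x : Fin (2 * k) → ℂ) : Prop :=
  (∀ i j : Fin k, i ≠ j →
    th1 (firstHalf x j - firstHalf x i) τ ≠ 0 ∧ th1 (firstHalf x j + firstHalf x i) τ ≠ 0) ∧
  (∀ i j : Fin k, i ≠ j →
    th1 (secondHalf x j - secondHalf x i) τ ≠ 0 ∧ th1 (secondHalf x j + secondHalf x i) τ ≠ 0) ∧
  (∀ i j : Fin k, hh τ (firstHalf x i) (secondHalf x j) ≠ 0)

/-- `h(w,w') = 1 − (3+ζ²)ww' + (1−ζ²)ww'(w+w')`. -/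
def hpol (ζ w w' : ℂ) : ℂ := 1 - (3 + ζ ^ 2) * w * w' + (1 - ζ ^ 2) * w * w' * (w + w')

/-- Vandermonde product `Δ(w₁,…,w_k) = ∏_{i<j}(w_j − w_i)`. -/
def vdm {k : ℕ} (y : Fin k → ℂ) : ℂ :=
  ∏ i : Fin k, ∏ j : Fin k, if i < j then y j - y i else 1

/-- The determinant-ratio expression defining the polynomial `H_{2k}`. -/
def Hratio (ζ : ℂ) (k : ℕ) (w : Fin (2 * k) → ℂ) : ℂ :=
  (∏ i : Fin k, ∏ j : Fin k, hpol ζ (firstHalf w i) (secondHalf w j))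
    / (vdm (firstHalf w) * vdm (secondHalf w))
    * Matrix.det (Matrix.of fun i j : Fin k => (hpol ζ (firstHalf w i) (secondHalf w j))⁻¹)

/-- The expression `Hratio` is well defined at `w`. -/
def HratioDefined (ζ : ℂ) (k : ℕ) (w : Fin (2 * k) → ℂ) : Prop :=
  (∀ i j : Fin k, i ≠ j → firstHalf w i ≠ firstHalf w j) ∧
  (∀ i j : Fin k, i ≠ j → secondHalf w i ≠ secondHalf w j) ∧
  (∀ i j : Fin k, hpol ζ (firstHalf w i) (secondHalf w j) ≠ 0)

/-- `H` is the family of Rosengren–Zinn-Justin polynomials `H_{2k}` for parameter `ζ`: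
for each `k`, `H k` is a polynomial function of the `2k` variables agreeing with the
determinant-ratio formula wherever the latter is defined, and `H 0 = 1`. -/
def IsHFamily (ζ : ℂ) (H : (k : ℕ) → (Fin (2 * k) → ℂ) → ℂ) : Prop :=
  (∀ w, H 0 w = 1) ∧
  (∀ k : ℕ, ∃ P : MvPolynomial (Fin (2 * k)) ℂ, ∀ w, H k w = MvPolynomial.eval w P) ∧
  (∀ (k : ℕ) (w : Fin (2 * k) → ℂ), HratioDefined ζ k w → H k w = Hratio ζ k w)

/-- Vertex weight `a(u)`. -/
def av (τ u : ℂ) : ℂ := th4 (2*ηc) (2*τ) * th1 (u + 2*ηc) (2*τ) * th4 u (2*τ)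
/-- Vertex weight `b(u)`. -/
def bv (τ u : ℂ) : ℂ := th4 (2*ηc) (2*τ) * th4 (u + 2*ηc) (2*τ) * th1 u (2*τ)
/-- Vertex weight `c(u)`. -/
def cv (τ u : ℂ) : ℂ := th1 (2*ηc) (2*τ) * th4 (u + 2*ηc) (2*τ) * th4 u (2*τ)
/-- Vertex weight `d(u)`. -/
def dv (τ u : ℂ) : ℂ := th1 (2*ηc) (2*τ) * th1 (u + 2*ηc) (2*τ) * th1 u (2*τ)
/-- `r(u) = a(u) + b(u)`. -/
def rv (τ u : ℂ) : ℂ := av τ u + bv τ u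

/-- Entries of the `R`-matrix of the eight-vertex model, in the basis `{↑↑,↑↓,↓↑,↓↓}`
identified with `Fin 2 × Fin 2` (`↑ = 0`, `↓ = 1`). -/
def Rent (τ u : ℂ) (p q : Fin 2 × Fin 2) : ℂ :=
  if p = q then (if p.1 = p.2 then av τ u else bv τ u)
  else if q = (p.2, p.1) then cv τ u
  else if p.1 = p.2 ∧ q.1 = q.2 then dv τ u
  else 0

/-- Entries of `Ř(u) = 𝒫 R(u)`. -/
def Rcheckent (τ u : ℂ) (p q : Fin 2 × Fin 2) : ℂ := Rent τ u (p.2, p.1) q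

/-- The boundary vector `χ(x) ∈ ℂ²⊗ℂ²`. -/
def chiV (τ lam x : ℂ) : Fin 2 × Fin 2 → ℂ := fun p =>
  if p = ((0 : Fin 2), (1 : Fin 2)) then th1 (x + lam) (2*τ) * th4 (x - lam - 2*ηc) (2*τ)
  else if p = ((1 : Fin 2), (0 : Fin 2)) then th1 (x - lam - 2*ηc) (2*τ) * th4 (x + lam) (2*τ)
  else 0

/-- The boundary vector `χ̄(x) ∈ ℂ²⊗ℂ²`. -/
def chibarV (τ lam x : ℂ) : Fin 2 × Fin 2 → ℂ := fun p =>
  if p = ((0 : Fin 2), (0 : Fin 2)) then th1 (x + lam) (2*τ) * th1 (x - lam - 2*ηc) (2*τ)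
  else if p = ((1 : Fin 2), (1 : Fin 2)) then th4 (x - lam - 2*ηc) (2*τ) * th4 (x + lam) (2*τ)
  else 0

/-- A family `Ψ_n(u₁,…,u_{2n+1}) ∈ (ℂ²)^{⊗(2n+1)}`, represented by its components
with respect to spin configurations `α : Fin (2n+1) → Fin 2` (`↑ = 0`, `↓ = 1`). -/
abbrev PsiFam := (n : ℕ) → (Fin (2 * n + 1) → ℂ) → (Fin (2 * n + 1) → Fin 2) → ℂ

/-- The action of `Ř(u)` on tensor factors `i`, `j` of `(ℂ²)^{⊗L}`. -/
def applyRc (τ u : ℂ) {L : ℕ} (i j : Fin L) (ψ : (Fin L → Fin 2) → ℂ) :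
    (Fin L → Fin 2) → ℂ := fun α =>
  ∑ s : Fin 2, ∑ t : Fin 2,
    Rcheckent τ u (α i, α j) (s, t) * ψ (Function.update (Function.update α i s) j t)

/-- Spin flip. -/
def flipS : Fin 2 → Fin 2 := fun s => if s = 0 then 1 else 0

/-- Components of the singlet `s = ↑↓ − ↓↑`. -/
def singletC : Fin 2 → Fin 2 → ℂ := fun s t =>
  if s = 0 ∧ t = 1 then 1 else if s = 1 ∧ t = 0 then -1 else 0

/-- Delete the entries at positions `i`, `i+1` from a tuple. -/
def delTwo {α : Type*} {n : ℕ} (i : ℕ) (u : Fin (2 * (n + 1) + 1) → α) : Fin (2 * n + 1) → α :=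
  fun j => if _h : (j : ℕ) < i then u ⟨j, by have := j.2; omega⟩
           else u ⟨(j : ℕ) + 2, by have := j.2; omega⟩

/-- The components of `Ψ_n` are entire functions of each `u_i`. -/
def PsiEntire (Ψ : PsiFam) : Prop :=
  ∀ (n : ℕ) (u : Fin (2*n+1) → ℂ) (i : Fin (2*n+1)) (α : Fin (2*n+1) → Fin 2),
    Differentiable ℂ fun z => Ψ n (Function.update u i z) α

/-- (P1): the exchange relations. -/
def PsiP1 (τ : ℂ) (Ψ : PsiFam) : Prop :=
  ∀ (n : ℕ) (u : Fin (2*n+1) → ℂ) (i j : Fin (2*n+1)), (j : ℕ) = (i : ℕ) + 1 →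
    applyRc τ (u j - u i) i j (Ψ n u)
      = fun α => rv τ (u j - u i) * Ψ n (fun l => u (Equiv.swap i j l)) α

/-- (P2): local spin flips. -/
def PsiP2 (τ : ℂ) (Ψ : PsiFam) : Prop :=
  ∀ (n : ℕ) (u : Fin (2*n+1) → ℂ) (i : Fin (2*n+1)) (α : Fin (2*n+1) → Fin 2),
    Ψ n u (Function.update α i (flipS (α i)))
      = (-(pnome τ)) ^ n * Complex.exp (-Complex.I * ∑ j, (u j - u i))
        * Ψ n (Function.update u i (u i + Real.pi * τ)) α

/-- (P3): quasi-periodicity of `Ψ_n` in each `u_i`. -/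
def PsiP3 (τ : ℂ) (Ψ : PsiFam) : Prop :=
  ∀ (n : ℕ) (u : Fin (2*n+1) → ℂ) (i : Fin (2*n+1)),
    (Ψ n (Function.update u i (u i + Real.pi))
      = fun α => (∏ j ∈ Finset.univ.erase i, (if α j = 0 then (1:ℂ) else -1)) * Ψ n u α) ∧
    (Ψ n (Function.update u i (u i + 2 * Real.pi * τ))
      = fun α => (pnome τ ^ (4*n))⁻¹ *
          Complex.exp (-2 * Complex.I * ∑ j, (u i - u j)) * Ψ n u α)

/-- (P4): the wheel condition. -/
def PsiP4 (Ψ : PsiFam) : Prop :=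
  ∀ (n : ℕ) (u : Fin (2*n+1) → ℂ),
    (∃ i j k : Fin (2*n+1), i < j ∧ j < k ∧ u j = u i + 2*ηc ∧ u k = u i + 4*ηc) →
    Ψ n u = 0

/-- (P5): the reduction relations. -/
def PsiP5 (τ : ℂ) (Ψ : PsiFam) : Prop :=
  ∀ (n : ℕ) (u : Fin (2*(n+1)+1) → ℂ) (i : ℕ) (hi : i + 1 < 2*(n+1)+1),
    u ⟨i+1, hi⟩ = u ⟨i, by omega⟩ + 2*ηc →
    Ψ (n+1) u = fun α =>
      (∏ j ∈ (Finset.univ.erase (⟨i, by omega⟩ : Fin (2*(n+1)+1))).erase ⟨i+1, hi⟩,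
          th1 (u ⟨i, by omega⟩ - u j - 2*ηc) τ)
        * singletC (α ⟨i, by omega⟩) (α ⟨i+1, hi⟩)
        * Ψ n (delTwo i u) (delTwo i α)

/-- (P6): `Ψ₀ = ↑ + ↓`. -/
def PsiP6 (Ψ : PsiFam) : Prop := ∀ u α, Ψ 0 u α = 1

/-- The inhomogeneity parameters `(x₁,−x₁,…,x_n,−x_n,0)`. -/
def interleave {n : ℕ} (x : Fin n → ℂ) : Fin (2*n+1) → ℂ := fun j =>
  if h : (j : ℕ) < 2*n then
    (if (j : ℕ) % 2 = 0 then x ⟨(j:ℕ)/2, by omega⟩ else -x ⟨(j:ℕ)/2, by omega⟩)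
  else 0

/-- Components of `χ(x)`. -/
def chiC (τ lam x : ℂ) (s t : Fin 2) : ℂ :=
  if s = 0 ∧ t = 1 then th1 (x + lam) (2*τ) * th4 (x - lam - 2*ηc) (2*τ)
  else if s = 1 ∧ t = 0 then th1 (x - lam - 2*ηc) (2*τ) * th4 (x + lam) (2*τ)
  else 0

/-- Components of `χ̄(x)`. -/
def chibarC (τ lam x : ℂ) (s t : Fin 2) : ℂ :=
  if s = 0 ∧ t = 0 then th1 (x + lam) (2*τ) * th1 (x - lam - 2*ηc) (2*τ)
  else if s = 1 ∧ t = 1 then th4 (x - lam - 2*ηc) (2*τ) * th4 (x + lam) (2*τ)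
  else 0

/-- The scalar product `Z_n(x₁,…,x_n) = ⟨ξ_n(x₁,…,x_n), Ψ_n(x₁,−x₁,…,x_n,−x_n,0)⟩`. -/
def Zfun (τ lam : ℂ) (Ψ : PsiFam) (n : ℕ) (x : Fin n → ℂ) : ℂ :=
  ∑ α : Fin (2*n+1) → Fin 2,
    (∏ m : Fin n, chiC τ lam (x m)
        (α ⟨2*(m:ℕ), by have := m.2; omega⟩) (α ⟨2*(m:ℕ)+1, by have := m.2; omega⟩))
      * (if α ⟨2*n, by omega⟩ = 0 then (1:ℂ) else 0)
      * Ψ n (interleave x) α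

/-- The scalar product `Z̄_n^±(x₁,…,x_n)`, with `ε = ±1`. -/
def Zbarfun (τ lam ε : ℂ) (Ψ : PsiFam) (n : ℕ) (x : Fin n → ℂ) : ℂ :=
  ∑ α : Fin (2*n+1) → Fin 2,
    (∏ m : Fin n, chibarC τ lam (x m)
        (α ⟨2*(m:ℕ), by have := m.2; omega⟩) (α ⟨2*(m:ℕ)+1, by have := m.2; omega⟩))
      * (if α ⟨2*n, by omega⟩ = 0 then (1:ℂ) else ε)
      * Ψ n (interleave x) α

/-- The normalisation constant `𝒩_n`. -/
def Ncoef (τ : ℂ) (n : ℕ) : ℂ :=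
  (-1 : ℂ) ^ ((n+1)/2) * (th1 ηc τ ^ (n^2))⁻¹ * (th4 0 (2*τ) / th4 ηc (2*τ)) ^ (n*(n+1)/2)

/-- The vector `ψ_n = 𝒩_n Ψ_n(0,…,0)`. -/
def psiH (τ : ℂ) (Ψ : PsiFam) (n : ℕ) (α : Fin (2*n+1) → Fin 2) : ℂ :=
  Ncoef τ n * Ψ n (fun _ => 0) α

/-- The scalar product `S_n(μ) = ((⟨↑↓| + μ⟨↓↑|)^{⊗n} ⊗ ⟨↑|) ψ_n`. -/
def Sfun (τ : ℂ) (Ψ : PsiFam) (n : ℕ) (μ : ℂ) : ℂ :=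
  ∑ α : Fin (2*n+1) → Fin 2,
    (∏ m : Fin n,
      (if α ⟨2*(m:ℕ), by have := m.2; omega⟩ = 0 ∧ α ⟨2*(m:ℕ)+1, by have := m.2; omega⟩ = 1
        then (1:ℂ)
       else if α ⟨2*(m:ℕ), by have := m.2; omega⟩ = 1 ∧ α ⟨2*(m:ℕ)+1, by have := m.2; omega⟩ = 0
        then μ
       else 0))
      * (if α ⟨2*n, by omega⟩ = 0 then (1:ℂ) else 0) * psiH τ Ψ n α

/-- The scalar product `S̄_n^±(ν) = ((⟨↑↑| + ν⟨↓↓|)^{⊗n} ⊗ (⟨↑| ± ⟨↓|)) ψ_n`, with `ε = ±1`. -/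
def Sbarfun (τ ε : ℂ) (Ψ : PsiFam) (n : ℕ) (ν : ℂ) : ℂ :=
  ∑ α : Fin (2*n+1) → Fin 2,
    (∏ m : Fin n,
      (if α ⟨2*(m:ℕ), by have := m.2; omega⟩ = 0 ∧ α ⟨2*(m:ℕ)+1, by have := m.2; omega⟩ = 0
        then (1:ℂ)
       else if α ⟨2*(m:ℕ), by have := m.2; omega⟩ = 1 ∧ α ⟨2*(m:ℕ)+1, by have := m.2; omega⟩ = 1
        then ν
       else 0))
      * (if α ⟨2*n, by omega⟩ = 0 then (1:ℂ) else ε) * psiH τ Ψ n α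

/-- The alternating spin configuration `↑↓↑↓⋯↑`. -/
def altConf {L : ℕ} : Fin L → Fin 2 := fun j => if (j : ℕ) % 2 = 0 then 0 else 1

/-- The fully polarised spin configuration `↓⋯↓`. -/
def downConf {L : ℕ} : Fin L → Fin 2 := fun _ => 1

/-- The spin configuration `↑⋯↑↓` with a single `↓` at the last site. -/
def lastDownConf {n : ℕ} : Fin (2*n+1) → Fin 2 := fun j => if (j : ℕ) = 2*n then 1 else 0

/-- `J₂ = −1/2`. -/
def J2c : ℂ := -(1/2)
/-- `J₃ = 1/(1+ζ)`. -/
def J3c (ζ : ℂ) : ℂ := 1/(1+ζ)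
/-- `J₄ = 1/(1−ζ)`. -/
def J4c (ζ : ℂ) : ℂ := 1/(1-ζ)
/-- `μ̄ = (μ−1)²/((ζ²−1)μ)`. -/
def mubar (ζ μ : ℂ) : ℂ := (μ - 1)^2 / ((ζ^2 - 1)*μ)
/-- `ν̄ = (ν−ζ)(νζ−1)/((ζ²−1)ν)`. -/
def nubar (ζ ν : ℂ) : ℂ := (ν - ζ)*(ν*ζ - 1) / ((ζ^2 - 1)*ν)

/-- The elliptic function `w(x)`. -/
def wfun (τ x : ℂ) : ℂ :=
  th4 ηc (2*τ) / th4 0 (2*τ) * th1 x τ ^ 2 / (th1 (x - ηc) τ * th1 (x + ηc) τ)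

/-- `β₂ = η + π/2`. -/
def β2c : ℂ := ηc + (Real.pi : ℂ)/2
/-- `β₃ = η + π/2 + πτ/2`. -/
def β3c (τ : ℂ) : ℂ := ηc + (Real.pi : ℂ)/2 + (Real.pi : ℂ)*τ/2
/-- `β₄ = η + πτ/2`. -/
def β4c (τ : ℂ) : ℂ := ηc + (Real.pi : ℂ)*τ/2

/-- `f` is an (even) theta function of degree `m`, nome `p = e^{iπτ}` and norm `0`
with respect to each of its variables. -/
def ThetaLike (τ : ℂ) (m : ℕ) {n : ℕ} (X : (Fin n → ℂ) → ℂ) : Prop :=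
  ∀ (x : Fin n → ℂ) (i : Fin n),
    Differentiable ℂ (fun z => X (Function.update x i z)) ∧
    (∀ z, X (Function.update x i (z + Real.pi)) = X (Function.update x i z)) ∧
    (∀ z, X (Function.update x i (z + Real.pi * τ))
        = ((-(pnome τ)) ^ m)⁻¹ * Complex.exp (-2 * Complex.I * ((m : ℂ) * z))
            * X (Function.update x i z)) ∧
    (∀ z, X (Function.update x i (-z)) = X (Function.update x i z))



/-- the coefficients η_{i,j} of STATEMENT 3 -/
def etaCoef (ζ : ℂ) (i j : ℤ) : ℂ :=
  if i < 0 ∨ j < 0 then 0 else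
    ∑ n ∈ Finset.Icc ((i.toNat + j.toNat + 2)/3) (min i.toNat j.toNat),
      (n.factorial : ℂ) * (3 + ζ^2) ^ (3*n - (i.toNat + j.toNat))
        * (ζ^2 - 1) ^ (i.toNat + j.toNat - 2*n)
        / (((i.toNat - n).factorial : ℂ) * ((j.toNat - n).factorial : ℂ)
            * ((3*n - (i.toNat + j.toNat)).factorial : ℂ))

/-- The determinant ratio defining `H_{2k}`, with the two halves of the variables separated. -/
def splitRatio (ζ : ℂ) {m : ℕ} (x y : Fin m → ℂ) : ℂ :=
  (∏ i, ∏ j, hpol ζ (x i) (y j)) / (vdm x * vdm y)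
    * Matrix.det (Matrix.of fun i j => (hpol ζ (x i) (y j))⁻¹)

/-- The symmetric polynomial `H₄` in four variables. -/
def hfour (ζ u v x y : ℂ) : ℂ :=
  3 + ζ ^ 2 + (ζ ^ 2 - 1) * (u + v) + (ζ ^ 2 - 1) * (x + y) + (ζ ^ 2 - 1) ^ 2 * u * v * (x * y)

/-- The determinant ratio after condensation at the pivot `(u, v)`. -/
def condensedRatio (ζ u v : ℂ) {m : ℕ} (x y : Fin m → ℂ) : ℂ :=
  (∏ i, ∏ j, hpol ζ (x i) (y j)) / (vdm x * vdm y)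
    * Matrix.det (Matrix.of fun i j => hfour ζ u v (x i) (y j) * (hpol ζ (x i) (y j))⁻¹)

theorem vdm_eq_det_vandermonde {m : ℕ} (x : Fin m → ℂ) :
    vdm x = (Matrix.vandermonde x).det := by
  rw [Matrix.det_vandermonde, vdm]
  refine Finset.prod_congr rfl fun i _ => ?_
  rw [← Finset.prod_filter]
  refine Finset.prod_congr ?_ fun _ _ => rfl
  ext j
  simp

theorem vdm_cons {m : ℕ} (u : ℂ) (x : Fin m → ℂ) :
    vdm (Fin.cons u x : Fin (m + 1) → ℂ) = (∏ i, (x i - u)) * vdm x := by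
  simp [vdm, Fin.prod_univ_succ]

theorem vdm_comp_perm {m : ℕ} (σ : Equiv.Perm (Fin m)) (x : Fin m → ℂ) :
    vdm (x ∘ σ) = (Equiv.Perm.sign σ : ℤ) * vdm x := by
  rw [vdm_eq_det_vandermonde, vdm_eq_det_vandermonde, ← Matrix.det_permute]
  rfl

theorem splitRatio_comp_perm (ζ : ℂ) {m : ℕ} (σ : Equiv.Perm (Fin m)) (x y : Fin m → ℂ) :
    splitRatio ζ (x ∘ σ) y = splitRatio ζ x y := by
  have hdet : Matrix.det (Matrix.of fun i j => (hpol ζ ((x ∘ σ) i) (y j))⁻¹)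
      = (Equiv.Perm.sign σ : ℤ) * Matrix.det (Matrix.of fun i j => (hpol ζ (x i) (y j))⁻¹) := by
    rw [← Matrix.det_permute]
    rfl
  have hprod : ∏ i, ∏ j, hpol ζ ((x ∘ σ) i) (y j) = ∏ i, ∏ j, hpol ζ (x i) (y j) :=
    Equiv.prod_comp σ fun i => ∏ j, hpol ζ (x i) (y j)
  rw [splitRatio, splitRatio, hdet, hprod, vdm_comp_perm]
  rcases Int.units_eq_one_or (Equiv.Perm.sign σ) with h | h <;> simp [h, div_neg]

theorem splitRatio_cons_swap (ζ : ℂ) {m : ℕ} (u v : ℂ) (r : Fin m → ℂ) (y : Fin (m + 2) → ℂ) :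
    splitRatio ζ (Fin.cons u (Fin.cons v r : Fin (m + 1) → ℂ) : Fin (m + 2) → ℂ) y
      = splitRatio ζ (Fin.cons v (Fin.cons u r : Fin (m + 1) → ℂ) : Fin (m + 2) → ℂ) y := by
  rw [← splitRatio_comp_perm ζ (Equiv.swap 0 1)]
  congr 1
  funext i
  refine Fin.cases ?_ (fun i => Fin.cases ?_ (fun i => ?_) i) i
  · simp
  · simp
  · have h : Equiv.swap (0 : Fin (m + 2)) 1 i.succ.succ = i.succ.succ := by
      apply Equiv.swap_apply_of_ne_of_ne
      · exact Fin.succ_ne_zero _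
      · intro h
        exact Fin.succ_ne_zero _ (Fin.succ_injective _ h)
    simp [h]

/-- One step of Gaussian elimination on the first column. -/
theorem det_eq_pivot_mul_det {m : ℕ} (A : Matrix (Fin (m + 1)) (Fin (m + 1)) ℂ) (h : A 0 0 ≠ 0) :
    A.det = A 0 0 * Matrix.det (Matrix.of fun i j : Fin m =>
      A i.succ j.succ - A i.succ 0 / A 0 0 * A 0 j.succ) := by
  let c : Fin (m + 1) → ℂ := Fin.cons 0 fun i => A i.succ 0 / A 0 0
  let B : Matrix (Fin (m + 1)) (Fin (m + 1)) ℂ := fun i j => A i j - c i * A 0 j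
  have hAB : A.det = B.det := by
    refine Matrix.det_eq_of_forall_row_eq_smul_add_const c 0 rfl fun i j => ?_
    simp [B, c]
  have hB : ∀ i : Fin m, B i.succ 0 = 0 := by
    intro i
    simp [B, c, h]
  rw [hAB, Matrix.det_succ_column_zero, Fin.sum_univ_succ]
  simp only [hB]
  simp [B, c]
  left
  congr 1

theorem inv_hpol_sub (ζ u v x y : ℂ) (huy : hpol ζ u y ≠ 0)
    (hxv : hpol ζ x v ≠ 0) (hxy : hpol ζ x y ≠ 0) :
    (hpol ζ x y)⁻¹ - (hpol ζ x v)⁻¹ / (hpol ζ u v)⁻¹ * (hpol ζ u y)⁻¹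
      = ((x - u) / hpol ζ x v)
        * (((y - v) / hpol ζ u y) * (hfour ζ u v x y * (hpol ζ x y)⁻¹)) := by
  field_simp
  simp only [hpol, hfour]
  ring

theorem splitRatio_cons (ζ u v : ℂ) {m : ℕ} (x y : Fin m → ℂ) (hx : ∀ i, x i ≠ u)
    (hy : ∀ j, y j ≠ v) (huv : hpol ζ u v ≠ 0) (huy : ∀ j, hpol ζ u (y j) ≠ 0)
    (hxv : ∀ i, hpol ζ (x i) v ≠ 0) (hxy : ∀ i j, hpol ζ (x i) (y j) ≠ 0) :
    splitRatio ζ (Fin.cons u x : Fin (m + 1) → ℂ) (Fin.cons v y : Fin (m + 1) → ℂ)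
      = condensedRatio ζ u v x y := by
  have hdet : Matrix.det (Matrix.of fun i j : Fin (m + 1) =>
      (hpol ζ ((Fin.cons u x : Fin (m + 1) → ℂ) i) ((Fin.cons v y : Fin (m + 1) → ℂ) j))⁻¹)
      = (hpol ζ u v)⁻¹ * ((∏ i, (x i - u) / hpol ζ (x i) v) * ((∏ j, (y j - v) / hpol ζ u (y j))
        * Matrix.det (Matrix.of fun i j => hfour ζ u v (x i) (y j) * (hpol ζ (x i) (y j))⁻¹))) := by
    rw [det_eq_pivot_mul_det _ (by simpa using huv), ← Matrix.det_mul_row, ← Matrix.det_mul_column]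
    simp only [Matrix.of_apply, Fin.cons_zero, Fin.cons_succ]
    congr 3
    ext i j
    exact inv_hpol_sub ζ u v (x i) (y j) (huy j) (hxv i) (hxy i j)
  have h1 : ∏ i, (x i - u) ≠ 0 := Finset.prod_ne_zero_iff.mpr fun i _ => sub_ne_zero.mpr (hx i)
  have h2 : ∏ j, (y j - v) ≠ 0 := Finset.prod_ne_zero_iff.mpr fun j _ => sub_ne_zero.mpr (hy j)
  have h3 : ∏ i, hpol ζ (x i) v ≠ 0 := Finset.prod_ne_zero_iff.mpr fun i _ => hxv i
  have h4 : ∏ j, hpol ζ u (y j) ≠ 0 := Finset.prod_ne_zero_iff.mpr fun j _ => huy j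
  rw [splitRatio, condensedRatio, hdet, vdm_cons, vdm_cons]
  simp only [Fin.prod_univ_succ, Fin.cons_zero, Fin.cons_succ, Finset.prod_mul_distrib,
    Finset.prod_div_distrib]
  by_cases hvx : vdm x = 0
  · simp [hvx]
  by_cases hvy : vdm y = 0
  · simp [hvy]
  field_simp

theorem hfour_swap (ζ u v x y : ℂ) : hfour ζ u v x y = hfour ζ v u x y := by
  simp only [hfour]
  ring

theorem condensedRatio_swap (ζ u v : ℂ) {m : ℕ} (x y : Fin m → ℂ) :
    condensedRatio ζ u v x y = condensedRatio ζ v u x y := by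
  simp only [condensedRatio, hfour_swap ζ u v]

/-- Condensation at two variables of the first half, by the symmetry of the determinant ratio. -/
theorem splitRatio_cons_cons (ζ u v y₀ : ℂ) {m : ℕ} (r : Fin m → ℂ) (y : Fin (m + 1) → ℂ)
    (huv : u ≠ v) (huy₀ : u ≠ y₀) (hru : ∀ i, r i ≠ u) (hrv : ∀ i, r i ≠ v)
    (hry₀ : ∀ i, r i ≠ y₀) (hyv : ∀ j, y j ≠ v) (hyy₀ : ∀ j, y j ≠ y₀)
    (Huv : hpol ζ u v ≠ 0) (Hvy₀ : hpol ζ v y₀ ≠ 0) (Hy₀v : hpol ζ y₀ v ≠ 0)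
    (Huy₀ : hpol ζ u y₀ ≠ 0)
    (Huy : ∀ j, hpol ζ u (y j) ≠ 0) (Hvy : ∀ j, hpol ζ v (y j) ≠ 0)
    (Hy₀y : ∀ j, hpol ζ y₀ (y j) ≠ 0) (Hry₀ : ∀ i, hpol ζ (r i) y₀ ≠ 0)
    (Hrv : ∀ i, hpol ζ (r i) v ≠ 0) (Hry : ∀ i j, hpol ζ (r i) (y j) ≠ 0) :
    splitRatio ζ (Fin.cons u (Fin.cons v r : Fin (m + 1) → ℂ) : Fin (m + 2) → ℂ)
        (Fin.cons y₀ y : Fin (m + 2) → ℂ)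
      = condensedRatio ζ u v (Fin.cons y₀ r : Fin (m + 1) → ℂ) y := by
  rw [splitRatio_cons_swap, splitRatio_cons, condensedRatio_swap, ← splitRatio_cons,
    splitRatio_cons_swap, splitRatio_cons]
  all_goals
    first
    | assumption
    | grind
    | (refine Fin.cases ?_ fun i => ?_ <;> grind [Fin.cons_zero, Fin.cons_succ])

open Filter Topology in
theorem eventually_add_mul_ne {p q p' q' : ℂ} (h : q ≠ q') :
    ∀ᶠ t in 𝓝[≠] (0 : ℂ), p + t * q ≠ p' + t * q' := by
  have hq : q - q' ≠ 0 := sub_ne_zero.mpr h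
  by_cases hp : p = p'
  · filter_upwards [self_mem_nhdsWithin] with t ht he
    rw [hp] at he
    exact h (mul_left_cancel₀ ht (add_left_cancel he))
  · have h0 : Tendsto (fun t : ℂ => (p + t * q) - (p' + t * q')) (𝓝 0)
        (𝓝 ((p + 0 * q) - (p' + 0 * q'))) :=
      Continuous.tendsto (by fun_prop) _
    have := h0.eventually_ne (show (p + 0 * q) - (p' + 0 * q') ≠ 0 by
      simpa using sub_ne_zero.mpr hp)
    filter_upwards [this.filter_mono nhdsWithin_le_nhds] with t ht he
    exact ht (sub_eq_zero.mpr he)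

open Filter Topology in
theorem eventually_eval_ne_zero {P : Polynomial ℂ} (hP : P ≠ 0) :
    ∀ᶠ t in 𝓝[≠] (0 : ℂ), P.eval t ≠ 0 := by
  have hfin : ({t : ℂ | P.eval t = 0} \ {0}).Finite :=
    (Polynomial.finite_setOfPred_isRoot hP).subset Set.sdiff_subset
  have hmem : ({t : ℂ | P.eval t = 0} \ {0})ᶜ ∈ 𝓝 (0 : ℂ) :=
    hfin.isClosed.isOpen_compl.mem_nhds (by simp)
  filter_upwards [nhdsWithin_le_nhds hmem, self_mem_nhdsWithin] with t ht ht0 he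
  exact ht ⟨he, ht0⟩

open Filter Topology in
theorem eventually_hpol_ne_zero (ζ p p' : ℂ) {q q' : ℂ} (hq : q ≠ 0) (hq' : q' ≠ 0)
    (hqq' : q + q' ≠ 0) :
    ∀ᶠ t in 𝓝[≠] (0 : ℂ), hpol ζ (p + t * q) (p' + t * q') ≠ 0 := by
  let c : ℕ → ℂ
    | 0 => hpol ζ p p'
    | 1 => -(3 + ζ ^ 2) * (p * q' + q * p')
        + (1 - ζ ^ 2) * ((p * q' + q * p') * (p + p') + p * p' * (q + q'))
    | 2 => -(3 + ζ ^ 2) * (q * q')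
        + (1 - ζ ^ 2) * (q * q' * (p + p') + (p * q' + q * p') * (q + q'))
    | _ => (1 - ζ ^ 2) * (q * q' * (q + q'))
  let P : Polynomial ℂ := ∑ n ∈ Finset.range 4, Polynomial.C (c n) * Polynomial.X ^ n
  have hcoeff : ∀ n < 4, P.coeff n = c n := by
    intro n hn
    simp [P, Polynomial.coeff_X_pow, hn]
  have hP : P ≠ 0 := by
    intro h0
    have h3 := hcoeff 3 (by norm_num)
    have h2 := hcoeff 2 (by norm_num)
    simp only [h0, Polynomial.coeff_zero, c] at h2 h3
    have hz : 1 - ζ ^ 2 = 0 := by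
      rcases mul_eq_zero.mp h3.symm with h | h
      · exact h
      · simp [hq, hq', hqq'] at h
    rw [hz, show ζ ^ 2 = 1 by linear_combination -hz] at h2
    norm_num [hq, hq'] at h2
  filter_upwards [eventually_eval_ne_zero hP] with t ht he
  apply ht
  rw [← he]
  simp only [P, Finset.sum_range_succ, Finset.sum_range_zero, Polynomial.eval_add,
    Polynomial.eval_mul, Polynomial.eval_C, Polynomial.eval_pow, Polynomial.eval_X,
    Polynomial.eval_zero, c, hpol]
  ring

/-- The change of basis turning the matrix of values `φ (t s_i, t s'_j)` into a matrix converging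
to the Taylor coefficients of `φ`. -/
def coefMap {m : ℕ} (s s' : Fin m → ℂ) (t : ℂ) :
    Matrix (Fin m) (Fin m) ℂ →ₗ[ℂ] Matrix (Fin m) (Fin m) ℂ where
  toFun M := Matrix.diagonal (fun a : Fin m => (t ^ (a : ℕ))⁻¹) * (Matrix.vandermonde s)⁻¹ * M
    * ((Matrix.vandermonde s')⁻¹.transpose * Matrix.diagonal (fun a : Fin m => (t ^ (a : ℕ))⁻¹))
  map_add' := by simp [mul_add, add_mul]
  map_smul' := by simp

theorem coefMap_apply {m : ℕ} (s s' : Fin m → ℂ) (t : ℂ) (M : Matrix (Fin m) (Fin m) ℂ)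
    (a b : Fin m) :
    coefMap s s' t M a b = ∑ i, ∑ j, (t ^ ((a : ℕ) + b))⁻¹
      * ((Matrix.vandermonde s)⁻¹ a i * (Matrix.vandermonde s')⁻¹ b j) * M i j := by
  simp only [coefMap, LinearMap.coe_mk, AddHom.coe_mk]
  rw [← Matrix.mul_assoc, Matrix.mul_diagonal, Matrix.mul_assoc, Matrix.mul_assoc,
    Matrix.diagonal_mul]
  simp only [Matrix.mul_apply, Matrix.transpose_apply, Finset.mul_sum, Finset.sum_mul, pow_add,
    mul_inv]
  refine Finset.sum_congr rfl fun i _ => Finset.sum_congr rfl fun j _ => ?_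
  ring

theorem vdm_const_mul {m : ℕ} (t : ℂ) (s : Fin m → ℂ) :
    vdm (fun i => t * s i) = (∏ a : Fin m, t ^ (a : ℕ)) * vdm s := by
  rw [vdm_eq_det_vandermonde, vdm_eq_det_vandermonde, ← Matrix.det_mul_row]
  congr 1
  ext i j
  simp [Matrix.vandermonde_apply, mul_pow]

theorem det_coefMap {m : ℕ} (s s' : Fin m → ℂ) (t : ℂ) (M : Matrix (Fin m) (Fin m) ℂ) :
    (coefMap s s' t M).det
      = M.det / (vdm (fun i => t * s i) * vdm (fun i => t * s' i)) := by
  simp only [coefMap, LinearMap.coe_mk, AddHom.coe_mk, Matrix.det_mul, Matrix.det_transpose,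
    Matrix.det_diagonal, Matrix.det_nonsing_inv, Ring.inverse_eq_inv', vdm_const_mul,
    ← vdm_eq_det_vandermonde, Finset.prod_inv_distrib]
  simp only [div_eq_mul_inv, mul_inv]
  ring

theorem sum_inv_vandermonde_mul_pow {m : ℕ} {s : Fin m → ℂ} (hs : Function.Injective s)
    (a : Fin m) {p : ℕ} (hp : p < m) :
    ∑ i, (Matrix.vandermonde s)⁻¹ a i * s i ^ p = if p = a then 1 else 0 := by
  have hu : IsUnit (Matrix.vandermonde s).det :=
    (Matrix.det_vandermonde_ne_zero_iff.mpr hs).isUnit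
  have h := congrFun (congrFun (Matrix.nonsing_inv_mul _ hu) a) ⟨p, hp⟩
  simpa [Matrix.mul_apply, Matrix.vandermonde_apply, Matrix.one_apply, Fin.ext_iff, eq_comm]
    using h

open Filter Topology in
theorem tendsto_inv_pow_mul_pow {n p : ℕ} (h : n < p) :
    Tendsto (fun t : ℂ => (t ^ n)⁻¹ * t ^ p) (𝓝[≠] 0) (𝓝 0) := by
  have h0 : Tendsto (fun t : ℂ => t ^ (p - n)) (𝓝[≠] 0) (𝓝 0) := by
    have : Tendsto (fun t : ℂ => t ^ (p - n)) (𝓝 0) (𝓝 (0 ^ (p - n))) :=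
      Continuous.tendsto (by fun_prop) _
    rw [zero_pow (by omega)] at this
    exact this.mono_left nhdsWithin_le_nhds
  refine h0.congr' ?_
  filter_upwards [self_mem_nhdsWithin] with t ht
  rw [pow_sub₀ _ ht h.le, mul_comm]

open Filter Topology in
theorem tendsto_coefMap_monomial {m : ℕ} {s s' : Fin m → ℂ} (hs : Function.Injective s)
    (hs' : Function.Injective s') (p q : ℕ) :
    Tendsto (fun t => coefMap s s' t (Matrix.of fun i j => (t * s i) ^ p * (t * s' j) ^ q))
      (𝓝[≠] 0) (𝓝 (Matrix.of fun a b : Fin m => if p = a ∧ q = b then (1 : ℂ) else 0)) := by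
  refine tendsto_pi_nhds.mpr fun a => tendsto_pi_nhds.mpr fun b => ?_
  have key : ∀ t, coefMap s s' t (Matrix.of fun i j => (t * s i) ^ p * (t * s' j) ^ q) a b
      = (t ^ ((a : ℕ) + b))⁻¹ * t ^ (p + q)
        * ((∑ i, (Matrix.vandermonde s)⁻¹ a i * s i ^ p)
          * ∑ j, (Matrix.vandermonde s')⁻¹ b j * s' j ^ q) := by
    intro t
    rw [coefMap_apply, Finset.sum_mul_sum, Finset.mul_sum]
    refine Finset.sum_congr rfl fun i _ => ?_
    rw [Finset.mul_sum]
    refine Finset.sum_congr rfl fun j _ => ?_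
    simp only [Matrix.of_apply, mul_pow, pow_add]
    ring
  simp only [key, Matrix.of_apply]
  by_cases hpa : p < m ∧ p ≠ a
  · simp [sum_inv_vandermonde_mul_pow hs a hpa.1, hpa.2]
  by_cases hqb : q < m ∧ q ≠ b
  · simp [sum_inv_vandermonde_mul_pow hs' b hqb.1, hqb.2]
  by_cases hpq : p = a ∧ q = b
  · have hone : Tendsto (fun _ : ℂ => (1 : ℂ)) (𝓝[≠] 0) (𝓝 1) := tendsto_const_nhds
    rw [if_pos hpq, hpq.1, hpq.2, sum_inv_vandermonde_mul_pow hs a a.2,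
      sum_inv_vandermonde_mul_pow hs' b b.2]
    refine hone.congr' ?_
    filter_upwards [self_mem_nhdsWithin] with t ht
    have : t ^ ((a : ℕ) + b) ≠ 0 := pow_ne_zero _ ht
    simp [this]
  · rw [if_neg hpq]
    have hlt : (a : ℕ) + b < p + q := by omega
    simpa using (tendsto_inv_pow_mul_pow hlt).mul_const _

open Filter Topology in
theorem tendsto_coefMap_remainder {m : ℕ} (s s' : Fin m → ℂ) {p q : ℕ} (hp : m ≤ p) (hq : m ≤ q)
    {ρ : ℂ → ℂ → ℂ} (hρ : ContinuousAt (fun z : ℂ × ℂ => ρ z.1 z.2) (0, 0)) :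
    Tendsto (fun t => coefMap s s' t
        (Matrix.of fun i j => (t * s i) ^ p * (t * s' j) ^ q * ρ (t * s i) (t * s' j)))
      (𝓝[≠] 0) (𝓝 0) := by
  refine tendsto_pi_nhds.mpr fun a => tendsto_pi_nhds.mpr fun b => ?_
  simp only [coefMap_apply, Matrix.of_apply, Matrix.zero_apply]
  rw [show 𝓝 (0 : ℂ) = 𝓝 (∑ _i : Fin m, ∑ _j : Fin m, 0) by simp]
  refine tendsto_finsetSum _ fun i _ => tendsto_finsetSum _ fun j _ => ?_
  have hlt : (a : ℕ) + b < p + q := by omega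
  have hcurve : Tendsto (fun t : ℂ => (t * s i, t * s' j)) (𝓝[≠] 0) (𝓝 (0, 0)) := by
    have : Tendsto (fun t : ℂ => (t * s i, t * s' j)) (𝓝 0) (𝓝 (0 * s i, 0 * s' j)) :=
      Continuous.tendsto (by fun_prop) _
    simp only [zero_mul] at this
    exact this.mono_left nhdsWithin_le_nhds
  have h := ((tendsto_inv_pow_mul_pow hlt).mul_const
    ((Matrix.vandermonde s)⁻¹ a i * (Matrix.vandermonde s')⁻¹ b j * (s i ^ p * s' j ^ q))).mul
      (hρ.tendsto.comp hcurve)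
  simp only [zero_mul] at h
  refine h.congr fun t => ?_
  simp only [Function.comp, mul_pow, pow_add]
  ring

theorem choose_mul_choose_eq_div {n l r : ℕ} (hl : l ≤ n) (hr : r ≤ l) :
    ((n.choose l : ℂ) * (l.choose r : ℂ))
      = n.factorial / (r.factorial * (l - r).factorial * (n - l).factorial) := by
  have h1 : ((n - l).factorial : ℂ) ≠ 0 := by exact_mod_cast Nat.factorial_ne_zero _
  have h2 : (l.factorial : ℂ) ≠ 0 := by exact_mod_cast Nat.factorial_ne_zero _
  have h3 : (r.factorial : ℂ) ≠ 0 := by exact_mod_cast Nat.factorial_ne_zero _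
  have h4 : ((l - r).factorial : ℂ) ≠ 0 := by exact_mod_cast Nat.factorial_ne_zero _
  rw [Nat.cast_choose ℂ hl, Nat.cast_choose ℂ hr]
  field_simp

theorem sum_range_eq_etaCoef (ζ : ℂ) {m a b : ℕ} (p q : ℕ) (ha : a < m) :
    ∑ n ∈ Finset.range m, ∑ l ∈ Finset.range (n + 1), ∑ r ∈ Finset.range (l + 1),
        ((n.choose l : ℂ) * l.choose r * (3 + ζ ^ 2) ^ (n - l) * (ζ ^ 2 - 1) ^ l)
          * (if n + r + p = a ∧ n + (l - r) + q = b then 1 else 0)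
      = etaCoef ζ ((a : ℤ) - p) ((b : ℤ) - q) := by
  by_cases hneg : a < p ∨ b < q
  · have h0 : (a : ℤ) - p < 0 ∨ (b : ℤ) - q < 0 := by omega
    rw [etaCoef, if_pos h0]
    refine Finset.sum_eq_zero fun n _ => Finset.sum_eq_zero fun l _ =>
      Finset.sum_eq_zero fun r _ => ?_
    rw [if_neg (by omega), mul_zero]
  obtain ⟨i, rfl⟩ : ∃ i, a = i + p := ⟨a - p, by omega⟩
  obtain ⟨j, rfl⟩ : ∃ j, b = j + q := ⟨b - q, by omega⟩
  have hi : (((i + p : ℕ) : ℤ) - p).toNat = i := by omega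
  have hj : (((j + q : ℕ) : ℤ) - q).toNat = j := by omega
  rw [etaCoef, if_neg (by omega), hi, hj]
  have hIcc : Finset.Icc ((i + j + 2) / 3) (min i j)
      = (Finset.range m).filter fun n => i + j ≤ 3 * n ∧ n ≤ i ∧ n ≤ j := by
    ext n
    simp only [Finset.mem_Icc, Finset.mem_filter, Finset.mem_range]
    omega
  rw [hIcc, Finset.sum_filter]
  refine Finset.sum_congr rfl fun n _ => ?_
  split_ifs with hn
  · rw [Finset.sum_eq_single_of_mem (i + j - 2 * n) (Finset.mem_range.mpr (by omega)),
      Finset.sum_eq_single_of_mem (i - n) (Finset.mem_range.mpr (by omega))]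
    · rw [if_pos (by omega), choose_mul_choose_eq_div (by omega) (by omega),
        show i + j - 2 * n - (i - n) = j - n by omega,
        show n - (i + j - 2 * n) = 3 * n - (i + j) by omega]
      ring
    · intro r _ hr
      rw [if_neg (by omega), mul_zero]
    · intro l _ hl
      refine Finset.sum_eq_zero fun r hr => ?_
      rw [Finset.mem_range] at hr
      rw [if_neg (by omega), mul_zero]
  · refine Finset.sum_eq_zero fun l hl => Finset.sum_eq_zero fun r hr => ?_
    rw [Finset.mem_range] at hl hr
    rw [if_neg (by omega), mul_zero]

theorem inv_hpol_eq (ζ x y : ℂ) (m : ℕ) (h : hpol ζ x y ≠ 0) :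
    (hpol ζ x y)⁻¹ = (∑ n ∈ Finset.range m, ∑ l ∈ Finset.range (n + 1),
        ∑ r ∈ Finset.range (l + 1),
          ((n.choose l : ℂ) * l.choose r * (3 + ζ ^ 2) ^ (n - l) * (ζ ^ 2 - 1) ^ l)
            * (x ^ (n + r) * y ^ (n + (l - r))))
      + x ^ m * y ^ m * ((3 + ζ ^ 2 + (ζ ^ 2 - 1) * (x + y)) ^ m * (hpol ζ x y)⁻¹) := by
  have hz : hpol ζ x y = 1 - x * y * (3 + ζ ^ 2 + (ζ ^ 2 - 1) * (x + y)) := by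
    simp only [hpol]
    ring
  have hexp : ∀ n, ∑ l ∈ Finset.range (n + 1), ∑ r ∈ Finset.range (l + 1),
          ((n.choose l : ℂ) * l.choose r * (3 + ζ ^ 2) ^ (n - l) * (ζ ^ 2 - 1) ^ l)
            * (x ^ (n + r) * y ^ (n + (l - r)))
      = (x * y * (3 + ζ ^ 2 + (ζ ^ 2 - 1) * (x + y))) ^ n := by
    intro n
    rw [mul_pow, add_comm (3 + ζ ^ 2), add_pow, Finset.mul_sum]
    refine Finset.sum_congr rfl fun l _ => ?_
    rw [mul_pow (ζ ^ 2 - 1), add_pow x y, Finset.mul_sum, Finset.sum_mul, Finset.sum_mul,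
      Finset.mul_sum]
    refine Finset.sum_congr rfl fun r _ => ?_
    rw [pow_add, pow_add, mul_pow]
    ring
  simp only [hexp]
  have hgeom := mul_neg_geom_sum (x * y * (3 + ζ ^ 2 + (ζ ^ 2 - 1) * (x + y))) m
  rw [← hz] at hgeom
  rw [eq_comm, ← mul_right_inj' h, mul_add, hgeom, mul_inv_cancel₀ h, mul_pow, mul_pow]
  field_simp
  ring

open Filter Topology in
theorem tendsto_hpol_mul (ζ c c' : ℂ) :
    Tendsto (fun t : ℂ => hpol ζ (t * c) (t * c')) (𝓝[≠] 0) (𝓝 1) := by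
  have h : Tendsto (fun t : ℂ => hpol ζ (t * c) (t * c')) (𝓝 0) (𝓝 (hpol ζ (0 * c) (0 * c'))) :=
    Continuous.tendsto (by unfold hpol; fun_prop) _
  simp only [hpol, zero_mul, mul_zero, sub_zero, add_zero] at h ⊢
  exact h.mono_left nhdsWithin_le_nhds

open Filter Topology in
theorem tendsto_coefMap_inv_hpol (ζ : ℂ) {m : ℕ} {s s' : Fin m → ℂ} (hs : Function.Injective s)
    (hs' : Function.Injective s') (p q : ℕ) :
    Tendsto (fun t => coefMap s s' t (Matrix.of fun i j =>
        (t * s i) ^ p * (t * s' j) ^ q * (hpol ζ (t * s i) (t * s' j))⁻¹)) (𝓝[≠] 0)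
      (𝓝 (Matrix.of fun a b : Fin m =>
        etaCoef ζ (((a : ℕ) : ℤ) - p) (((b : ℕ) : ℤ) - q))) := by
  have hρ : ContinuousAt (fun z : ℂ × ℂ =>
      (3 + ζ ^ 2 + (ζ ^ 2 - 1) * (z.1 + z.2)) ^ m * (hpol ζ z.1 z.2)⁻¹) (0, 0) := by
    refine ContinuousAt.mul (by fun_prop) (ContinuousAt.inv₀ ?_ (by simp [hpol]))
    unfold hpol
    fun_prop
  have hrem := tendsto_coefMap_remainder s s' (p := m + p) (q := m + q)
    (ρ := fun x y => (3 + ζ ^ 2 + (ζ ^ 2 - 1) * (x + y)) ^ m * (hpol ζ x y)⁻¹)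
    (by omega) (by omega) hρ
  have hmain := tendsto_finsetSum (Finset.range m) fun n _ =>
    tendsto_finsetSum (Finset.range (n + 1)) fun l _ =>
      tendsto_finsetSum (Finset.range (l + 1)) fun r _ =>
        (tendsto_coefMap_monomial hs hs' (n + r + p) (n + (l - r) + q)).const_smul
          ((n.choose l : ℂ) * l.choose r * (3 + ζ ^ 2) ^ (n - l) * (ζ ^ 2 - 1) ^ l)
  have hlim : (Matrix.of fun a b : Fin m =>
      etaCoef ζ (((a : ℕ) : ℤ) - p) (((b : ℕ) : ℤ) - q))
      = (∑ n ∈ Finset.range m, ∑ l ∈ Finset.range (n + 1), ∑ r ∈ Finset.range (l + 1),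
        ((n.choose l : ℂ) * l.choose r * (3 + ζ ^ 2) ^ (n - l) * (ζ ^ 2 - 1) ^ l) •
          Matrix.of fun a b : Fin m =>
            if n + r + p = a ∧ n + (l - r) + q = b then (1 : ℂ) else 0) + 0 := by
    ext a b
    simp only [add_zero, Matrix.sum_apply, Matrix.smul_apply, Matrix.of_apply, smul_eq_mul]
    rw [sum_range_eq_etaCoef ζ p q a.2]
  rw [hlim]
  refine (hmain.add hrem).congr' ?_
  have hne : ∀ᶠ t in 𝓝[≠] (0 : ℂ), ∀ i j, hpol ζ (t * s i) (t * s' j) ≠ 0 :=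
    eventually_all.mpr fun i => eventually_all.mpr fun j =>
      (tendsto_hpol_mul ζ (s i) (s' j)).eventually_ne one_ne_zero
  filter_upwards [hne] with t ht
  simp only [← map_smul, ← map_sum, ← map_add]
  congr 1
  ext i j
  simp only [Matrix.add_apply, Matrix.sum_apply, Matrix.smul_apply, Matrix.of_apply, smul_eq_mul]
  conv_rhs => rw [inv_hpol_eq ζ (t * s i) (t * s' j) m (ht i j), mul_add, Finset.mul_sum]
  simp only [Finset.mul_sum]
  congr 1
  · refine Finset.sum_congr rfl fun n _ => Finset.sum_congr rfl fun l _ =>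
      Finset.sum_congr rfl fun r _ => ?_
    rw [pow_add _ _ p, pow_add _ _ q]
    ring
  · rw [pow_add, pow_add]
    ring

open Filter Topology in
theorem tendsto_condensedRatio (ζ : ℂ) {m : ℕ} {s s' : Fin m → ℂ} (hs : Function.Injective s)
    (hs' : Function.Injective s') {u v : ℂ → ℂ} {w w' : ℂ} (hu : Tendsto u (𝓝[≠] 0) (𝓝 w))
    (hv : Tendsto v (𝓝[≠] 0) (𝓝 w')) :
    Tendsto (fun t => condensedRatio ζ (u t) (v t) (fun i => t * s i) (fun j => t * s' j))
      (𝓝[≠] 0) (𝓝 (Matrix.det (Matrix.of fun i j : Fin m =>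
          (3 + ζ^2 + (ζ^2 - 1)*(w + w')) * etaCoef ζ ((i:ℕ):ℤ) ((j:ℕ):ℤ)
          + (ζ^2 - 1) * (etaCoef ζ (((i:ℕ):ℤ) - 1) ((j:ℕ):ℤ)
              + etaCoef ζ ((i:ℕ):ℤ) (((j:ℕ):ℤ) - 1)
              + (ζ^2 - 1) * w * w' * etaCoef ζ (((i:ℕ):ℤ) - 1) (((j:ℕ):ℤ) - 1))))) := by
  have hprod : Tendsto (fun t : ℂ => ∏ i, ∏ j, hpol ζ (t * s i) (t * s' j)) (𝓝[≠] 0) (𝓝 1) := by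
    rw [show 𝓝 (1 : ℂ) = 𝓝 (∏ _i : Fin m, ∏ _j : Fin m, 1) by simp]
    exact tendsto_finsetProd _ fun i _ => tendsto_finsetProd _ fun j _ => tendsto_hpol_mul _ _ _
  have hM := fun p q => tendsto_coefMap_inv_hpol ζ hs hs' p q
  have hA : Tendsto (fun t => 3 + ζ ^ 2 + (ζ ^ 2 - 1) * (u t + v t)) (𝓝[≠] 0)
      (𝓝 (3 + ζ ^ 2 + (ζ ^ 2 - 1) * (w + w'))) :=
    ((hu.add hv).const_mul _).const_add _
  have hB : Tendsto (fun t => (ζ ^ 2 - 1) ^ 2 * (u t * v t)) (𝓝[≠] 0)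
      (𝓝 ((ζ ^ 2 - 1) ^ 2 * (w * w'))) :=
    (hu.mul hv).const_mul _
  have hsum := ((hA.smul (hM 0 0)).add (((hM 1 0).add (hM 0 1)).const_smul (ζ ^ 2 - 1))).add
    (hB.smul (hM 1 1))
  have hdet := hprod.mul (((continuous_id.matrix_det).tendsto _).comp hsum)
  rw [one_mul] at hdet
  convert hdet using 1
  · funext t
    simp only [Function.comp, id, ← map_smul, ← map_add, det_coefMap, condensedRatio]
    rw [div_mul_eq_mul_div, mul_div_assoc]
    congr 3
    ext i j
    simp only [hfour, Matrix.add_apply, Matrix.smul_apply, Matrix.of_apply, smul_eq_mul]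
    ring
  · congr 2
    ext i j
    simp only [id, Matrix.add_apply, Matrix.smul_apply, Matrix.of_apply, smul_eq_mul,
      Nat.cast_zero, Nat.cast_one, sub_zero]
    ring

open Filter Topology in
theorem stmt3 (ζ : ℂ) (H : (k : ℕ) → (Fin (2*k) → ℂ) → ℂ) (hH : IsHFamily ζ H)
    (k : ℕ) (w w' : ℂ) :
    H (k+2) (padded [w, w'])
      = Matrix.det (Matrix.of fun i j : Fin (k+1) =>
          (3 + ζ^2 + (ζ^2 - 1)*(w + w')) * etaCoef ζ ((i:ℕ):ℤ) ((j:ℕ):ℤ)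
          + (ζ^2 - 1) * (etaCoef ζ (((i:ℕ):ℤ) - 1) ((j:ℕ):ℤ)
              + etaCoef ζ ((i:ℕ):ℤ) (((j:ℕ):ℤ) - 1)
              + (ζ^2 - 1) * w * w' * etaCoef ζ (((i:ℕ):ℤ) - 1) (((j:ℕ):ℤ) - 1))) := by
  let γ : ℂ → Fin (2 * (k + 2)) → ℂ := fun t j => padded [w, w'] j + t * ((j : ℕ) + 1 : ℂ)
  let s : Fin (k + 1) → ℂ := Fin.cons ((k : ℂ) + 3) fun i : Fin k => ((i : ℕ) : ℂ) + 3
  let s' : Fin (k + 1) → ℂ := fun j => (k : ℂ) + (j : ℕ) + 4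
  have hs : Function.Injective s := by
    refine Fin.cons_injective_iff.mpr ⟨?_, ?_⟩
    · rintro ⟨i, hi⟩
      have : ((i : ℕ) : ℂ) = k := add_right_cancel hi
      have := i.2
      norm_cast at *
      omega
    · intro i j hij
      exact Fin.ext (by exact_mod_cast add_right_cancel hij)
  have hs' : Function.Injective s' := by
    intro i j hij
    exact Fin.ext (by exact_mod_cast add_left_cancel (add_right_cancel hij))
  have hne : ∀ᶠ t in 𝓝[≠] (0 : ℂ), ∀ i j, i ≠ j → γ t i ≠ γ t j := by
    refine eventually_all.mpr fun i => eventually_all.mpr fun j => ?_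
    by_cases hij : i = j
    · simp [hij]
    · have hq : ((i : ℕ) + 1 : ℂ) ≠ (j : ℕ) + 1 := by
        intro h
        exact hij (Fin.ext (by exact_mod_cast add_right_cancel h))
      filter_upwards [eventually_add_mul_ne hq] with t ht _
      exact ht
  have hnz : ∀ᶠ t in 𝓝[≠] (0 : ℂ), ∀ i j, hpol ζ (γ t i) (γ t j) ≠ 0 :=
    eventually_all.mpr fun i => eventually_all.mpr fun j =>
      eventually_hpol_ne_zero ζ _ _ (Nat.cast_add_one_ne_zero _)
        (Nat.cast_add_one_ne_zero _) (by norm_cast)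
  have hu : Tendsto (fun t : ℂ => w + t * 1) (𝓝[≠] 0) (𝓝 w) := by
    have : Tendsto (fun t : ℂ => w + t * 1) (𝓝 0) (𝓝 (w + 0 * 1)) :=
      Continuous.tendsto (by fun_prop) _
    simpa using this.mono_left nhdsWithin_le_nhds
  have hv : Tendsto (fun t : ℂ => w' + t * 2) (𝓝[≠] 0) (𝓝 w') := by
    have : Tendsto (fun t : ℂ => w' + t * 2) (𝓝 0) (𝓝 (w' + 0 * 2)) :=
      Continuous.tendsto (by fun_prop) _
    simpa using this.mono_left nhdsWithin_le_nhds
  have hH0 : Tendsto (fun t => H (k + 2) (γ t)) (𝓝[≠] 0) (𝓝 (H (k + 2) (padded [w, w']))) := by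
    obtain ⟨P, hP⟩ := hH.2.1 (k + 2)
    have : Tendsto (fun t => MvPolynomial.eval (γ t) P) (𝓝 0) (𝓝 (MvPolynomial.eval (γ 0) P)) :=
      ((MvPolynomial.continuous_eval P).comp (by fun_prop)).tendsto _
    have hγ0 : γ 0 = padded [w, w'] := by
      funext j
      simp [γ]
    simp only [hP]
    rw [← hγ0]
    exact this.mono_left nhdsWithin_le_nhds
  refine tendsto_nhds_unique hH0 ((tendsto_condensedRatio ζ hs hs' hu hv).congr' ?_)
  filter_upwards [hne, hnz] with t hne hnz
  have hdef : HratioDefined ζ (k + 2) (γ t) := by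
    refine ⟨fun i j hij => hne _ _ ?_, fun i j hij => hne _ _ ?_, fun i j => hnz _ _⟩
    · simpa [Fin.ext_iff] using hij
    · simpa [Fin.ext_iff] using hij
  have hγu : w + t * 1 = γ t ⟨0, by omega⟩ := by simp [γ, padded]
  have hγv : w' + t * 2 = γ t ⟨1, by omega⟩ := by
    change w' + t * 2 = w' + t * (((1 : ℕ) : ℂ) + 1)
    norm_num
  have hγ : ∀ n (hn : n < 2 * (k + 2)), 2 ≤ n → γ t ⟨n, hn⟩ = t * ((n : ℂ) + 1) := by
    intro n hn h2
    simp only [γ, padded]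
    rw [List.getD_eq_default _ _ (by simpa using h2), zero_add]
  have hγy₀ : t * ((k : ℂ) + 3) = γ t ⟨k + 2, by omega⟩ := by
    rw [hγ _ _ (by omega)]
    push_cast
    ring
  have hγr : ∀ i : Fin k, t * (((i : ℕ) : ℂ) + 3) = γ t ⟨i + 2, by omega⟩ := by
    intro i
    rw [hγ _ _ (by omega)]
    push_cast
    ring
  have hγy : ∀ j : Fin (k + 1), t * s' j = γ t ⟨k + 2 + (j + 1), by omega⟩ := by
    intro j
    rw [hγ _ _ (by omega)]
    simp only [s']
    push_cast
    ring
  have hx : firstHalf (γ t) = (Fin.cons (w + t * 1)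
      (Fin.cons (w' + t * 2) fun i : Fin k => t * (((i : ℕ) : ℂ) + 3) : Fin (k + 1) → ℂ) :
        Fin (k + 2) → ℂ) := by
    funext i
    refine Fin.cases ?_ (fun i => Fin.cases ?_ (fun i => ?_) i) i
    · exact hγu.symm
    · exact hγv.symm
    · exact (hγr i).symm
  have hy : secondHalf (γ t) = (Fin.cons (t * ((k : ℂ) + 3)) fun j => t * s' j :
      Fin (k + 2) → ℂ) := by
    funext j
    refine Fin.cases ?_ (fun j => ?_) j
    · exact hγy₀.symm
    · exact (hγy j).symm
  have hts : (fun i => t * s i) = (Fin.cons (t * ((k : ℂ) + 3))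
      fun i : Fin k => t * (((i : ℕ) : ℂ) + 3) : Fin (k + 1) → ℂ) := by
    funext i
    refine Fin.cases ?_ (fun i => ?_) i <;> simp [s]
  have hratio : Hratio ζ (k + 2) (γ t) = splitRatio ζ (firstHalf (γ t)) (secondHalf (γ t)) := rfl
  rw [hH.2.2 _ _ hdef, hratio, hx, hy, hts, splitRatio_cons_cons]
  all_goals
    simp only [hγu, hγv, hγy₀, hγr, hγy]
    intros
    first
    | exact hnz _ _
    | (refine hne _ _ ?_
       simp only [ne_eq, Fin.mk.injEq]
       omega)


end
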